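/- arXiv:2106.11474 — 3 statements merged into one kernel-verified Lean document; each statement's English description precedes it below -/
import Mathlib

section
/- Let R be a commutative ring, S a multiplicative subset of R, and f : M → N an S-isomorphism of R-modules. Then for every R-module L and every integer n ≥ 0, the induced map Ext^n_R(f, L) : Ext^n_R(N, L) → Ext^n_R(M, L) is an S-isomorphism. -/
open CategoryTheory

universe u

/-- `f` is an `S`-isomorphism: its kernel and cokernel are uniformly `S`-torsion,
expressed elementwise. -/
def IsSIso {R : Type u} [CommRing R] (S : Submonoid R) {M N : Type*}
    [Zero M] [SMul R M] [Zero N] [SMul R N] (f : M → N) : Prop :=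
  (∃ s ∈ S, ∀ x : M, f x = 0 → s • x = 0) ∧ (∃ s ∈ S, ∀ y : N, ∃ x : M, s • y = f x)

/-!
A morphism `f` of an `R`-linear abelian category is an `S`-isomorphism exactly when it is
invertible up to some `s ∈ S`, that is, when `f ≫ g` and `g ≫ f` are both multiplication by `s` for
some `g`. This criterion is equational, so every `R`-linear functor preserves `S`-isomorphisms,
whether or not it is exact; and `Ext^n(-, L)` is an `R`-linear functor on the opposite category.
-/

open Limits

section LinearFunctors

variable {R : Type*} [Semiring R] {C D : Type*} [Category* C] [Category* D]

/-- The `R`-linear structure on the opposite of an `R`-linear category `C`, with scalars acting on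
the morphisms of `Cᵒᵖ` as they do on the underlying morphisms of `C`. -/
instance oppositeLinear [Preadditive C] [Linear R C] : Linear R Cᵒᵖ where
  homModule _ _ :=
    { smul r f := (r • f.unop).op
      one_smul f := Quiver.Hom.unop_inj (one_smul R f.unop)
      mul_smul r s f := Quiver.Hom.unop_inj (mul_smul r s f.unop)
      smul_zero r := Quiver.Hom.unop_inj (smul_zero r)
      smul_add r f g := Quiver.Hom.unop_inj (smul_add r f.unop g.unop)
      add_smul r s f := Quiver.Hom.unop_inj (add_smul r s f.unop)
      zero_smul f := Quiver.Hom.unop_inj (zero_smul R f.unop) }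
  smul_comp _ _ _ r f g := Quiver.Hom.unop_inj (Linear.comp_smul _ _ _ g.unop r f.unop)
  comp_smul _ _ _ f r g := Quiver.Hom.unop_inj (Linear.smul_comp _ _ _ r g.unop f.unop)

lemma op_smul_hom [Preadditive C] [Linear R C] {X Y : C} (r : R) (f : X ⟶ Y) :
    (r • f).op = r • f.op :=
  rfl

lemma unop_smul_hom [Preadditive C] [Linear R C] {X Y : Cᵒᵖ} (r : R) (f : X ⟶ Y) :
    (r • f).unop = r • f.unop :=
  rfl

instance rightOp_linear [Preadditive C] [Linear R C] [Preadditive D] [Linear R D]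
    (F : Cᵒᵖ ⥤ D) [F.Linear R] : F.rightOp.Linear R where
  map_smul f r := by
    rw [Functor.rightOp_map, op_smul_hom, F.map_smul, op_smul_hom, Functor.rightOp_map]

instance leftOp_linear [Preadditive C] [Linear R C] [Preadditive D] [Linear R D]
    (F : C ⥤ Dᵒᵖ) [F.Linear R] : F.leftOp.Linear R where
  map_smul f r := by
    rw [Functor.leftOp_map, unop_smul_hom, F.map_smul, unop_smul_hom, Functor.leftOp_map]

instance homologyFunctor_linear [Preadditive C] [Linear R C] [CategoryWithHomology C]
    {ι : Type*} (c : ComplexShape ι) (i : ι) :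
    (HomologicalComplex.homologyFunctor C c i).Linear R where
  map_smul f r :=
    ShortComplex.homologyMap_smul ((HomologicalComplex.shortComplexFunctor C c i).map f) r

instance single₀_linear [Preadditive C] [Linear R C] [HasZeroObject C] :
    (ChainComplex.single₀ C).Linear R where
  map_smul f r := by
    ext
    simp only [HomologicalComplex.smul_f_apply, ChainComplex.single₀_map_f_zero]
    rfl

instance leftDerived_linear [Abelian C] [HasProjectiveResolutions C] [Abelian D]
    [Linear R C] [Linear R D] (F : C ⥤ D) [F.Additive] [F.Linear R] (n : ℕ) :
    (F.leftDerived n).Linear R where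
  map_smul {X Y} f r := by
    let P := projectiveResolution X
    let Q := projectiveResolution Y
    let φ := ProjectiveResolution.lift f P Q
    have φ_lifts : φ ≫ Q.π = P.π ≫ (ChainComplex.single₀ C).map f :=
      ProjectiveResolution.lift_commutes f P Q
    have smul_φ_lifts : (r • φ) ≫ Q.π = P.π ≫ (ChainComplex.single₀ C).map (r • f) := by
      rw [Functor.map_smul, Linear.smul_comp, φ_lifts, Linear.comp_smul]
    rw [F.leftDerived_map_eq n f φ φ_lifts, F.leftDerived_map_eq n (r • f) (r • φ) smul_φ_lifts,
      Functor.map_smul, Linear.smul_comp, Linear.comp_smul]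

end LinearFunctors

section Ext

variable {R : Type*} [CommRing R] {C : Type*} [Category* C]

instance linearYoneda_obj_linear [Preadditive C] [Linear R C] (Y : C) :
    ((linearYoneda R C).obj Y).Linear R where
  map_smul f r := by
    ext x
    exact Linear.smul_comp _ _ _ r f.unop x

instance ext_flip_obj_linear [Abelian C] [Linear R C] [EnoughProjectives C] (n : ℕ) (L : C) :
    ((Ext R C n).flip.obj L).Linear R :=
  inferInstanceAs ((((linearYoneda R C).obj L).rightOp.leftDerived n).leftOp.Linear R)

end Ext

section KernelCokernel

variable {R : Type*} [Semiring R] {C : Type*} [Category* C] [Preadditive C] [Linear R C]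

lemma smul_id_kernel_eq_zero_iff {X Y : C} (f : X ⟶ Y) [HasKernel f] (s : R) :
    s • 𝟙 (kernel f) = 0 ↔ s • kernel.ι f = 0 := by
  rw [← cancel_mono (kernel.ι f), Linear.smul_comp, Category.id_comp, zero_comp]

lemma smul_id_cokernel_eq_zero_iff {X Y : C} (f : X ⟶ Y) [HasCokernel f] (s : R) :
    s • 𝟙 (cokernel f) = 0 ↔ s • cokernel.π f = 0 := by
  rw [← cancel_epi (cokernel.π f), Linear.comp_smul, Category.comp_id, comp_zero]

end KernelCokernel

section SIsomorphisms

variable {R : Type*} [CommRing R] (S : Submonoid R)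

/-- An object `T` of an `R`-linear category is uniformly `S`-torsion if some `s ∈ S` annihilates
it; in the absence of elements, this says that `s` acts as zero on `𝟙 T`. -/
def IsUniformlySTorsion {C : Type*} [Category* C] [Preadditive C] [Linear R C] (T : C) : Prop :=
  ∃ s ∈ S, s • 𝟙 T = 0

variable {C D : Type*} [Category* C] [Category* D] [Abelian C] [Abelian D]
  [Linear R C] [Linear R D]

/-- The notion of `S`-isomorphism in an `R`-linear abelian category: a morphism whose kernel and
cokernel are uniformly `S`-torsion. For modules it agrees with `IsSIso`, see
`isSIsoHom_iff_isSIso`. -/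
def IsSIsoHom {X Y : C} (f : X ⟶ Y) : Prop :=
  IsUniformlySTorsion S (kernel f) ∧ IsUniformlySTorsion S (cokernel f)

variable {S}

lemma exists_comp_eq_smul_id_of_epi {X Y : C} (e : X ⟶ Y) [Epi e] {s : R}
    (hs : s • kernel.ι e = 0) : ∃ a : Y ⟶ X, e ≫ a = s • 𝟙 X ∧ a ≫ e = s • 𝟙 Y := by
  have hker : kernel.ι e ≫ (s • 𝟙 X) = 0 := by rw [Linear.comp_smul, Category.comp_id, hs]
  have hea : e ≫ Abelian.epiDesc e (s • 𝟙 X) hker = s • 𝟙 X := Abelian.comp_epiDesc e _ hker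
  refine ⟨_, hea, ?_⟩
  rw [← cancel_epi e, reassoc_of% hea, Linear.smul_comp, Linear.comp_smul, Category.id_comp,
    Category.comp_id]

lemma exists_comp_eq_smul_id_of_mono {X Y : C} (m : X ⟶ Y) [Mono m] {t : R}
    (ht : t • cokernel.π m = 0) : ∃ b : Y ⟶ X, m ≫ b = t • 𝟙 X ∧ b ≫ m = t • 𝟙 Y := by
  have hcoker : (t • 𝟙 Y) ≫ cokernel.π m = 0 := by rw [Linear.smul_comp, Category.id_comp, ht]
  have hbm : Abelian.monoLift m (t • 𝟙 Y) hcoker ≫ m = t • 𝟙 Y :=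
    Abelian.monoLift_comp m _ hcoker
  refine ⟨_, ?_, hbm⟩
  rw [← cancel_mono m, Category.assoc, hbm, Linear.smul_comp, Linear.comp_smul, Category.id_comp,
    Category.comp_id]

lemma IsSIsoHom.exists_comp_eq_smul_id {X Y : C} {f : X ⟶ Y} (hf : IsSIsoHom S f) :
    ∃ s ∈ S, ∃ g : Y ⟶ X, f ≫ g = s • 𝟙 X ∧ g ≫ f = s • 𝟙 Y := by
  obtain ⟨⟨s, hs, hker⟩, ⟨t, ht, hcoker⟩⟩ := hf
  rw [smul_id_kernel_eq_zero_iff] at hker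
  rw [smul_id_cokernel_eq_zero_iff] at hcoker
  obtain ⟨Z, e, m, _, _, rfl⟩ : ∃ (Z : C) (e : X ⟶ Z) (m : Z ⟶ Y), Epi e ∧ Mono m ∧ e ≫ m = f :=
    ⟨_, _, _, inferInstance, inferInstance, Abelian.image.fac f⟩
  have hker_e : s • kernel.ι e = 0 := by
    have ι_comp : kernel.ι e ≫ e ≫ m = 0 := by rw [kernel.condition_assoc, zero_comp]
    rw [← kernel.lift_ι (e ≫ m) (kernel.ι e) ι_comp, ← Linear.comp_smul, hker, comp_zero]
  have hcoker_m : t • cokernel.π m = 0 := by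
    have comp_π : (e ≫ m) ≫ cokernel.π m = 0 := by
      rw [Category.assoc, cokernel.condition, comp_zero]
    rw [← cokernel.π_desc (e ≫ m) (cokernel.π m) comp_π, ← Linear.smul_comp, hcoker, zero_comp]
  obtain ⟨a, hea, hae⟩ := exists_comp_eq_smul_id_of_epi e hker_e
  obtain ⟨b, hmb, hbm⟩ := exists_comp_eq_smul_id_of_mono m hcoker_m
  refine ⟨s * t, S.mul_mem hs ht, b ≫ a, ?_, ?_⟩
  · calc (e ≫ m) ≫ b ≫ a = e ≫ (m ≫ b) ≫ a := by simp only [Category.assoc]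
      _ = t • (e ≫ a) := by rw [hmb, Linear.smul_comp, Category.id_comp, Linear.comp_smul]
      _ = (s * t) • 𝟙 X := by rw [hea, smul_smul, mul_comm]
  · calc (b ≫ a) ≫ e ≫ m = b ≫ (a ≫ e) ≫ m := by simp only [Category.assoc]
      _ = s • (b ≫ m) := by rw [hae, Linear.smul_comp, Category.id_comp, Linear.comp_smul]
      _ = (s * t) • 𝟙 Y := by rw [hbm, smul_smul]

lemma IsSIsoHom.of_comp_eq_smul_id {X Y : C} {f : X ⟶ Y} {g : Y ⟶ X} {s : R} (hs : s ∈ S)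
    (hfg : f ≫ g = s • 𝟙 X) (hgf : g ≫ f = s • 𝟙 Y) : IsSIsoHom S f := by
  refine ⟨⟨s, hs, (smul_id_kernel_eq_zero_iff f s).2 ?_⟩,
    ⟨s, hs, (smul_id_cokernel_eq_zero_iff f s).2 ?_⟩⟩
  · calc s • kernel.ι f = kernel.ι f ≫ f ≫ g := by
          rw [hfg, Linear.comp_smul, Category.comp_id]
      _ = 0 := by rw [kernel.condition_assoc, zero_comp]
  · calc s • cokernel.π f = g ≫ f ≫ cokernel.π f := by
          rw [reassoc_of% hgf, Linear.smul_comp, Category.id_comp]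
      _ = 0 := by rw [cokernel.condition, comp_zero]

lemma IsSIsoHom.op {X Y : C} {f : X ⟶ Y} (hf : IsSIsoHom S f) : IsSIsoHom S f.op := by
  obtain ⟨s, hs, g, hfg, hgf⟩ := hf.exists_comp_eq_smul_id
  refine .of_comp_eq_smul_id (g := g.op) hs ?_ ?_
  · rw [← op_comp, hgf, op_smul_hom, op_id]
  · rw [← op_comp, hfg, op_smul_hom, op_id]

lemma IsSIsoHom.map {X Y : C} {f : X ⟶ Y} (hf : IsSIsoHom S f) (F : C ⥤ D) [F.Linear R] :
    IsSIsoHom S (F.map f) := by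
  obtain ⟨s, hs, g, hfg, hgf⟩ := hf.exists_comp_eq_smul_id
  refine .of_comp_eq_smul_id (g := F.map g) hs ?_ ?_
  · rw [← F.map_comp, hfg, F.map_smul, F.map_id]
  · rw [← F.map_comp, hgf, F.map_smul, F.map_id]

lemma isSIsoHom_iff_isSIso {M N : ModuleCat R} (f : M ⟶ N) : IsSIsoHom S f ↔ IsSIso S f := by
  constructor
  · intro hf
    obtain ⟨s, hs, g, hfg, hgf⟩ := hf.exists_comp_eq_smul_id
    refine ⟨⟨s, hs, fun x hx => ?_⟩, ⟨s, hs, fun y => ⟨g y, ?_⟩⟩⟩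
    · have hgfx : g (f x) = s • x := ConcreteCategory.congr_hom hfg x
      rw [← hgfx, hx, map_zero]
    · exact (ConcreteCategory.congr_hom hgf y).symm
  · rintro ⟨⟨s, hs, hker⟩, ⟨t, ht, hcoker⟩⟩
    refine ⟨⟨s, hs, (smul_id_kernel_eq_zero_iff f s).2 ?_⟩,
      ⟨t, ht, (smul_id_cokernel_eq_zero_iff f t).2 ?_⟩⟩
    · ext x
      exact hker _ (ConcreteCategory.congr_hom (kernel.condition f) x)
    · ext y
      obtain ⟨x, hx⟩ := hcoker y
      calc t • cokernel.π f y = cokernel.π f (f x) := by rw [← map_smul, hx]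
        _ = 0 := ConcreteCategory.congr_hom (cokernel.condition f) x

end SIsomorphisms

theorem stmt2_general {R : Type*} [CommRing R] (S : Submonoid R) {C : Type*} [Category* C]
    [Abelian C] [Linear R C] [EnoughProjectives C] {X Y : C} (f : X ⟶ Y) (hf : IsSIsoHom S f)
    (L : C) (n : ℕ) : IsSIsoHom S (((Ext R C n).map f.op).app L) :=
  hf.op.map ((Ext R C n).flip.obj L)

/-- If `f : M → N` is an `S`-isomorphism of `R`-modules, then for every `R`-module `L`
and every `n ≥ 0`, the induced map `Ext^n_R(N, L) → Ext^n_R(M, L)` is an `S`-isomorphism. -/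
theorem stmt2 {R : Type u} [CommRing R] (S : Submonoid R)
    {M N : ModuleCat.{u} R} (f : M ⟶ N) (hf : IsSIso S (⇑f))
    (L : ModuleCat.{u} R) (n : ℕ) :
    IsSIso S (⇑(((Ext R (ModuleCat.{u} R) n).map f.op).app L)) :=
  (isSIsoHom_iff_isSIso _).1 (stmt2_general S f ((isSIsoHom_iff_isSIso f).2 hf) L n)
end

section
/- Let R be a commutative ring, S a multiplicative subset of R, and 0 → A → B → C → 0 an S-exact sequence of R-modules in which B is S-injective. Then for every R-module M and every integer n ≥ 1, there exists an S-isomorphism between Ext^n_R(M, C) and Ext^{n+1}_R(M, A). -/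
open CategoryTheory

universe u

/-- A module is uniformly `S`-torsion if a single `s ∈ S` kills it. -/
def UnifSTorsion {R : Type u} [CommRing R] (S : Submonoid R) (M : Type*) [Zero M] [SMul R M] :
    Prop :=
  ∃ s ∈ S, ∀ m : M, s • m = (0 : M)

/-- The sequence `X --u--> Y --v--> Z` is `S`-exact at `Y`. -/
def SExactAt {R : Type u} [CommRing R] (S : Submonoid R) {X Y Z : Type*}
    [Zero Y] [SMul R Y] [Zero Z] (u : X → Y) (v : Y → Z) : Prop :=
  ∃ s ∈ S, (∀ y : Y, v y = 0 → ∃ x : X, s • y = u x) ∧ ∀ x : X, v (s • u x) = 0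

/-!
Factor `g` as `B ↠ im g ↪ C`. Up to elements of `S`, the kernel of `B ↠ im g` is `A` and `im g`
is `C`, and an `S`-isomorphism has an inverse up to multiplication by an element of `S`, a datum
which the linear functors `Ext^n(M, -)` preserve. Hence it is enough to treat the genuinely short
exact sequence `0 → ker g → B → im g → 0`. Its connecting map `Ext^n(M, im g) → Ext^{n+1}(M, ker g)`
is an `S`-isomorphism as soon as `Ext^n(M, B)` and `Ext^{n+1}(M, B)` are uniformly `S`-torsion.
Shifting dimension along `0 → K → P → M → 0` with `P` projective, `S`-injectivity of `B` provides
this for all `n ≥ 1`.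
-/

universe t v w

section SIso

variable {R : Type u} [CommRing R] {S : Submonoid R}
  {M N L : Type*} [AddCommGroup M] [Module R M] [AddCommGroup N] [Module R N]
  [AddCommGroup L] [Module R L]

lemma UnifSTorsion.of_surjective (hM : UnifSTorsion S M) (f : M →ₗ[R] N)
    (hf : Function.Surjective f) : UnifSTorsion S N := by
  obtain ⟨s, hs, h⟩ := hM
  refine ⟨s, hs, fun y => ?_⟩
  obtain ⟨x, rfl⟩ := hf y
  rw [← map_smul, h, map_zero]

lemma IsSIso.of_linearEquiv (e : M ≃ₗ[R] N) : IsSIso S (e : M →ₗ[R] N) :=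
  ⟨⟨1, S.one_mem, fun x hx => by simpa using hx⟩, 1, S.one_mem, fun y => ⟨e.symm y, by simp⟩⟩

lemma IsSIso.comp {g : N →ₗ[R] L} {f : M →ₗ[R] N} (hg : IsSIso S g) (hf : IsSIso S f) :
    IsSIso S (g ∘ₗ f) := by
  obtain ⟨⟨a, ha, hfk⟩, b, hb, hfc⟩ := hf
  obtain ⟨⟨c, hc, hgk⟩, d, hd, hgc⟩ := hg
  refine ⟨⟨a * c, S.mul_mem ha hc, fun x hx => ?_⟩, b * d, S.mul_mem hb hd, fun y => ?_⟩
  · rw [mul_smul]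
    exact hfk _ (by rw [map_smul, hgk _ hx])
  · obtain ⟨z, hz⟩ := hgc y
    obtain ⟨x, hx⟩ := hfc z
    exact ⟨x, by rw [mul_smul, hz, ← map_smul, hx, LinearMap.comp_apply]⟩

lemma IsSIso.of_comp_eq_smul {f : M →ₗ[R] N} {g : N →ₗ[R] M} {s : R} (hs : s ∈ S)
    (hgf : g ∘ₗ f = s • LinearMap.id) (hfg : f ∘ₗ g = s • LinearMap.id) : IsSIso S f :=
  ⟨⟨s, hs, fun x hx => by simpa [hx] using (LinearMap.congr_fun hgf x).symm⟩,
    s, hs, fun y => ⟨g y, (LinearMap.congr_fun hfg y).symm⟩⟩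

lemma IsSIso.exists_comp_eq_smul {f : M →ₗ[R] N} (hf : IsSIso S f) :
    ∃ g : N →ₗ[R] M, ∃ s ∈ S, g ∘ₗ f = s • LinearMap.id ∧ f ∘ₗ g = s • LinearMap.id := by
  obtain ⟨⟨a, ha, hker⟩, b, hb, hcoker⟩ := hf
  choose p hp using hcoker
  -- `p` is linear only modulo `ker f`; multiplying by `a` removes the ambiguity.
  have smul_eq_of_map_eq (x y : M) (h : f x = f y) : a • x = a • y := by
    rw [← sub_eq_zero, ← smul_sub]
    exact hker _ (by rw [map_sub, h, sub_self])
  refine ⟨{ toFun := fun y => a • p y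
            map_add' := fun y z => ?_
            map_smul' := fun r y => ?_ },
    a * b, S.mul_mem ha hb, LinearMap.ext fun x => ?_, LinearMap.ext fun y => ?_⟩
  · rw [← smul_add]
    exact smul_eq_of_map_eq _ _ (by rw [map_add, ← hp, ← hp, ← hp, smul_add])
  · rw [RingHom.id_apply, smul_comm r a]
    exact smul_eq_of_map_eq _ _ (by rw [map_smul, ← hp, ← hp, smul_comm])
  · change a • p (f x) = (a * b) • x
    rw [mul_smul]
    exact smul_eq_of_map_eq _ _ (by rw [← hp, map_smul])
  · change f (a • p y) = (a * b) • y
    rw [map_smul, ← hp, mul_smul]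

lemma IsSIso.subtype_range {g : M →ₗ[R] N} (hg : ∃ s ∈ S, ∀ y : N, ∃ x : M, s • y = g x) :
    IsSIso S (LinearMap.range g).subtype := by
  obtain ⟨s, hs, h⟩ := hg
  refine ⟨⟨1, S.one_mem, fun x hx => by rw [one_smul]; exact Subtype.ext hx⟩, s, hs, fun y => ?_⟩
  obtain ⟨x, hx⟩ := h y
  exact ⟨⟨g x, x, rfl⟩, hx⟩

lemma SExactAt.rangeRestrict {X : Type*} {f : X → N} {g : N →ₗ[R] L} (hfg : SExactAt S f g) :
    SExactAt S f g.rangeRestrict := by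
  obtain ⟨s, hs, hker, hzero⟩ := hfg
  exact ⟨s, hs, fun y hy => hker y (congrArg Subtype.val hy), fun x => Subtype.ext (hzero x)⟩

lemma SExactAt.exists_isSIso_ker {f : M →ₗ[R] N} {g : N →ₗ[R] L} (hfg : SExactAt S f g)
    (hf : ∃ s ∈ S, ∀ x : M, f x = 0 → s • x = 0) :
    ∃ k : M →ₗ[R] LinearMap.ker g, IsSIso S k := by
  obtain ⟨b, hb, hker, hzero⟩ := hfg
  obtain ⟨a, ha, hf⟩ := hf
  refine ⟨(b • f).codRestrict (LinearMap.ker g) hzero,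
    ⟨a * b, S.mul_mem ha hb, fun x hx => ?_⟩, b * b, S.mul_mem hb hb, fun y => ?_⟩
  · have hbx : f (b • x) = 0 := (f.map_smul b x).trans (congrArg Subtype.val hx)
    rw [mul_smul, hf _ hbx]
  · obtain ⟨x, hx⟩ := hker y.1 y.2
    refine ⟨x, Subtype.ext ?_⟩
    rw [mul_smul]
    exact congrArg (b • ·) hx

end SIso

section Comparison

variable {R : Type u} [CommRing R] {C : Type t} [Category.{v} C] [Abelian C] [Linear R C]
  [HasExt.{w} C]

section Resolution

variable {X : C} (P : ProjectiveResolution X)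

lemma smul_extMk {Y : C} {n : ℕ} (r : R) (f : P.complex.X n ⟶ Y) (m : ℕ) (hm : n + 1 = m)
    (hf : P.complex.d m n ≫ f = 0) :
    r • P.extMk f m hm hf = P.extMk (r • f) m hm (by rw [Linear.comp_smul, hf, smul_zero]) := by
  rw [Abelian.Ext.smul_eq_comp_mk₀, P.extMk_comp_mk₀]
  simp only [Linear.comp_smul, Category.comp_id]

lemma extMk_degree_zero_eq_zero_iff {Y : C} (f : P.complex.X 0 ⟶ Y) (m : ℕ) (hm : 0 + 1 = m)
    (hf : P.complex.d m 0 ≫ f = 0) : P.extMk f m hm hf = 0 ↔ f = 0 := by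
  refine ⟨fun h => ?_, by rintro rfl; exact P.extMk_zero m hm⟩
  rw [← P.extEquivCohomologyClass.apply_eq_iff_eq, P.extEquivCohomologyClass_extMk,
    P.extEquivCohomologyClass_zero, CochainComplex.HomComplex.CohomologyClass.mk_eq_zero_iff,
    CochainComplex.HomComplex.Cocycle.toSingleMk_mem_coboundaries_iff _ _ _ _ _ 1 (by simp)] at h
  obtain ⟨g, hg⟩ := h
  have hd : P.cochainComplex.d (-(0 : ℕ)) 1 = 0 :=
    (P.cochainComplex.isZero_of_isStrictlyLE 0 1).eq_of_tgt _ _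
  rw [hd, Limits.zero_comp, eq_comm] at hg
  exact (Preadditive.IsIso.comp_left_eq_zero _ _).mp hg

variable (R)

/-- The map sending an `n`-cocycle of `Hom(P, Y)` to its class in `Abelian.Ext X Y n`. -/
noncomputable def extMkLinearMap (Y : C) (n : ℕ) :
    LinearMap.ker ((P.complex.linearYonedaObj R Y).sc n).g.hom →ₗ[R] Abelian.Ext X Y n where
  toFun x := P.extMk x.1 _ (CochainComplex.next ℕ n).symm x.2
  map_add' x y := (P.add_extMk x.1 y.1 _ _ x.2 y.2).symm
  map_smul' r x := (smul_extMk P r x.1 _ _ x.2).symm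

lemma extMkLinearMap_surjective (Y : C) (n : ℕ) :
    Function.Surjective (extMkLinearMap R P Y n) := fun α => by
  obtain ⟨f, hf, rfl⟩ := P.extMk_surjective α _ (CochainComplex.next ℕ n).symm
  exact ⟨⟨f, hf⟩, rfl⟩

lemma ker_extMkLinearMap (Y : C) (n : ℕ) :
    LinearMap.ker (extMkLinearMap R P Y n) =
      LinearMap.range ((P.complex.linearYonedaObj R Y).sc n).moduleCatToCycles := by
  ext x
  have mem_range_iff : x ∈ LinearMap.range
      ((P.complex.linearYonedaObj R Y).sc n).moduleCatToCycles ↔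
        ∃ h : P.complex.X ((ComplexShape.up ℕ).prev n) ⟶ Y, P.complex.d n _ ≫ h = x.1 :=
    exists_congr fun h => Subtype.ext_iff
  rw [mem_range_iff]
  cases n with
  | zero =>
    refine (extMk_degree_zero_eq_zero_iff P x.1 _ (CochainComplex.next ℕ 0).symm x.2).trans ?_
    simpa using eq_comm
  | succ n =>
    exact P.extMk_eq_zero_iff x.1 _ (CochainComplex.next ℕ (n + 1)).symm x.2 _
      (by rw [CochainComplex.prev_nat_succ])

end Resolution

variable [EnoughProjectives C]

/-- The comparison of `Ext`, the derived functor of `Hom` computed by projective resolutions, with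
`Abelian.Ext`, the group of shifted morphisms in the derived category. -/
noncomputable def extLinearEquiv (X Y : C) (n : ℕ) :
    ((Ext R C n).obj (Opposite.op X)).obj Y ≃ₗ[R] Abelian.Ext X Y n :=
  let P := projectiveResolution X
  (P.isoExt n Y ≪≫ ShortComplex.moduleCatHomologyIso _).toLinearEquiv ≪≫ₗ
    Submodule.quotEquivOfEq _ _ (ker_extMkLinearMap R P Y n).symm ≪≫ₗ
      (extMkLinearMap R P Y n).quotKerEquivOfSurjective (extMkLinearMap_surjective R P Y n)

end Comparison

section AbelianExt

open Abelian

variable {R : Type u} [CommRing R] {S : Submonoid R}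
  {C : Type t} [Category.{v} C] [Abelian C] [Linear R C] [HasExt.{w} C]

lemma unifSTorsion_ext_iff [EnoughProjectives C] {X Y : C} {n : ℕ} :
    UnifSTorsion S (((_root_.Ext R C n).obj (Opposite.op X)).obj Y) ↔
      UnifSTorsion S (Ext X Y n) :=
  ⟨fun h => h.of_surjective _ (extLinearEquiv X Y n).surjective,
    fun h => h.of_surjective _ (extLinearEquiv X Y n).symm.surjective⟩

lemma UnifSTorsion.ext_succ {T : ShortComplex C} (hT : T.ShortExact) [Projective T.X₂] {Y : C}
    {n : ℕ} (h : UnifSTorsion S (Ext T.X₁ Y n)) : UnifSTorsion S (Ext T.X₃ Y (n + 1)) :=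
  h.of_surjective (hT.extClass.precompOfLinear R Y (add_comm 1 n)) fun x =>
    Ext.contravariant_sequence_exact₃ hT Y x (Ext.eq_zero_of_projective _) (add_comm 1 n)

lemma unifSTorsion_ext_of_one_le [EnoughProjectives C] {Y : C}
    (hY : ∀ X : C, UnifSTorsion S (Ext X Y 1)) {n : ℕ} (hn : 1 ≤ n) (X : C) :
    UnifSTorsion S (Ext X Y n) := by
  induction n, hn using Nat.le_induction generalizing X with
  | base => exact hY X
  | succ n _ ih =>
    have hT : (ShortComplex.mk _ _ (Limits.kernel.condition (Projective.π X))).ShortExact :=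
      { exact := ShortComplex.exact_of_f_is_kernel _ (Limits.kernelIsKernel _) }
    exact (ih _).ext_succ hT

lemma isSIso_postcomp_mk₀ {X Y : C} {f : X ⟶ Y} {g : Y ⟶ X} {s : R} (hs : s ∈ S)
    (hfg : f ≫ g = s • 𝟙 X) (hgf : g ≫ f = s • 𝟙 Y) (M : C) (n : ℕ) :
    IsSIso S ((Ext.mk₀ f).postcompOfLinear R M (add_zero n)) := by
  refine IsSIso.of_comp_eq_smul (g := (Ext.mk₀ g).postcompOfLinear R M (add_zero n)) hs ?_ ?_
  · ext x
    simp [hfg, Ext.smul_eq_comp_mk₀]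
  · ext x
    simp [hgf, Ext.smul_eq_comp_mk₀]

lemma isSIso_postcomp_extClass {T : ShortComplex C} (hT : T.ShortExact) (M : C) (n : ℕ)
    (h₀ : UnifSTorsion S (Ext M T.X₂ n)) (h₁ : UnifSTorsion S (Ext M T.X₂ (n + 1))) :
    IsSIso S (hT.extClass.postcompOfLinear R M (rfl : n + 1 = n + 1)) := by
  obtain ⟨a, ha, h₀⟩ := h₀
  obtain ⟨b, hb, h₁⟩ := h₁
  refine ⟨⟨a, ha, fun x hx => ?_⟩, b, hb, fun y => ?_⟩
  · obtain ⟨z, rfl⟩ := Ext.covariant_sequence_exact₃ M hT x rfl hx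
    rw [← Ext.smul_comp, h₀, Ext.zero_comp]
  · obtain ⟨x, hx⟩ := Ext.covariant_sequence_exact₁ M hT (b • y) (by rw [Ext.smul_comp, h₁]) rfl
    exact ⟨x, hx.symm⟩

end AbelianExt

section Modules

open Abelian

variable {R : Type u} [CommRing R] [Small.{v} R] {S : Submonoid R}

lemma IsSIso.exists_isSIso_ext {X Y : ModuleCat.{v} R} {f : X →ₗ[R] Y} (hf : IsSIso S f)
    (M : ModuleCat.{v} R) (n : ℕ) : ∃ e : Ext M Y n →ₗ[R] Ext M X n, IsSIso S e := by
  obtain ⟨g, s, hs, hgf, hfg⟩ := hf.exists_comp_eq_smul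
  exact ⟨_, isSIso_postcomp_mk₀ (f := ModuleCat.ofHom g) (g := ModuleCat.ofHom f) hs
    (ModuleCat.hom_ext hfg) (ModuleCat.hom_ext hgf) M n⟩

lemma SExactAt.exists_isSIso_ext {A B C : ModuleCat.{v} R} {f : A →ₗ[R] B} {g : B →ₗ[R] C}
    (hfg : SExactAt S f g) (hf : ∃ s ∈ S, ∀ x : A, f x = 0 → s • x = 0)
    (hg : ∃ s ∈ S, ∀ c : C, ∃ b : B, s • c = g b) (M : ModuleCat.{v} R) (n : ℕ)
    (h₀ : UnifSTorsion S (Ext M B n)) (h₁ : UnifSTorsion S (Ext M B (n + 1))) :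
    ∃ e : Ext M C n →ₗ[R] Ext M A (n + 1), IsSIso S e := by
  have hT := LinearMap.shortExact_shortComplexKer g.surjective_rangeRestrict
  obtain ⟨k, hk⟩ := hfg.rangeRestrict.exists_isSIso_ker hf
  obtain ⟨eC, heC⟩ := (IsSIso.subtype_range hg).exists_isSIso_ext (X := .of R _) M n
  obtain ⟨eA, heA⟩ := hk.exists_isSIso_ext (Y := .of R _) M (n + 1)
  exact ⟨_, heA.comp ((isSIso_postcomp_extClass hT M n h₀ h₁).comp heC)⟩

end Modules

theorem stmt5_general {R : Type u} [CommRing R] [Small.{v} R] (S : Submonoid R)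
    {A B C : ModuleCat.{v} R} (f : A ⟶ B) (g : B ⟶ C)
    (hA : ∃ s ∈ S, ∀ x : A, f x = 0 → s • x = (0 : A))
    (hB : SExactAt S (⇑f) (⇑g))
    (hC : ∃ s ∈ S, ∀ c : C, ∃ b : B, s • c = g b)
    (M : ModuleCat.{v} R) (n : ℕ)
    (h₀ : UnifSTorsion S (((Ext R (ModuleCat.{v} R) n).obj (Opposite.op M)).obj B))
    (h₁ : UnifSTorsion S (((Ext R (ModuleCat.{v} R) (n + 1)).obj (Opposite.op M)).obj B)) :
    ∃ e : ((Ext R (ModuleCat.{v} R) n).obj (Opposite.op M)).obj C ⟶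
          ((Ext R (ModuleCat.{v} R) (n + 1)).obj (Opposite.op M)).obj A,
      IsSIso S (⇑e) := by
  obtain ⟨e, he⟩ := SExactAt.exists_isSIso_ext (f := f.hom) (g := g.hom) hB hA hC M n
    (unifSTorsion_ext_iff.mp h₀) (unifSTorsion_ext_iff.mp h₁)
  exact ⟨ModuleCat.ofHom _, (IsSIso.of_linearEquiv (extLinearEquiv M A (n + 1)).symm).comp
    (he.comp (IsSIso.of_linearEquiv (extLinearEquiv M C n)))⟩

/-- If `0 → A → B → C → 0` is `S`-exact with `B` `S`-injective, then for every module `M`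
and every `n ≥ 1` there is an `S`-isomorphism `Ext^n(M, C) → Ext^{n+1}(M, A)`. -/
theorem stmt5 {R : Type u} [CommRing R] (S : Submonoid R)
    {A B C : ModuleCat.{u} R} (f : A ⟶ B) (g : B ⟶ C)
    (hA : ∃ s ∈ S, ∀ x : A, f x = 0 → s • x = (0 : A))
    (hB : SExactAt S (⇑f) (⇑g))
    (hC : ∃ s ∈ S, ∀ c : C, ∃ b : B, s • c = g b)
    (hBinj : ∀ N : ModuleCat.{u} R,
      UnifSTorsion S (((Ext R (ModuleCat.{u} R) 1).obj (Opposite.op N)).obj B)) :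
    ∀ (M : ModuleCat.{u} R) (n : ℕ), 1 ≤ n →
      ∃ e : ((Ext R (ModuleCat.{u} R) n).obj (Opposite.op M)).obj C ⟶
            ((Ext R (ModuleCat.{u} R) (n + 1)).obj (Opposite.op M)).obj A,
        IsSIso S (⇑e) := by
  intro M n hn
  have hExt {k : ℕ} (hk : 1 ≤ k) := unifSTorsion_ext_iff (R := R).mpr <|
    unifSTorsion_ext_of_one_le (fun N => unifSTorsion_ext_iff.mp (hBinj N)) hk M
  exact stmt5_general S f g hA hB hC M n (hExt hn) (hExt (hn.trans n.le_succ))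
end

section
/- Let R be a commutative ring, S a multiplicative subset of R, M an R-module and n ≥ 0 an integer. If Ext^{n+1}_R(N, M) is uniformly S-torsion for every R-module N, then Ext^{n+k}_R(N, M) is uniformly S-torsion for every R-module N and every integer k ≥ 1. -/
open CategoryTheory

universe u

/-!
Dimension shifting. Choose a short exact sequence `0 ⟶ K ⟶ P ⟶ N ⟶ 0` with `P` projective.
Splicing it onto a projective resolution of `K` gives a projective resolution of `N`, which shows
that `Ext^{m+2}(N, M) ≅ Ext^{m+1}(K, M)`. Since the hypothesis ranges over all first arguments, it
passes from one degree to the next.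
-/

open Limits

section Exactness

variable {C : Type*} [Category* C] [HasZeroMorphisms C]

lemma exact_epi_comp {T : ShortComplex C} (hT : T.Exact) {X : C} (e : X ⟶ T.X₁) [Epi e] :
    (ShortComplex.mk (e ≫ T.f) T.g (by simp)).Exact := by
  let φ : ShortComplex.mk (e ≫ T.f) T.g (by simp) ⟶ T := { τ₁ := e, τ₂ := 𝟙 _, τ₃ := 𝟙 _ }
  have : Epi φ.τ₁ := ‹Epi e›
  have : IsIso φ.τ₂ := inferInstanceAs (IsIso (𝟙 _))
  have : Mono φ.τ₃ := inferInstanceAs (Mono (𝟙 _))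
  exact (ShortComplex.exact_iff_of_epi_of_isIso_of_mono φ).2 hT

lemma exact_comp_mono {T : ShortComplex C} (hT : T.Exact) {X : C} (i : T.X₃ ⟶ X) [Mono i] :
    (ShortComplex.mk T.f (T.g ≫ i) (by simp)).Exact := by
  let φ : T ⟶ ShortComplex.mk T.f (T.g ≫ i) (by simp) := { τ₁ := 𝟙 _, τ₂ := 𝟙 _, τ₃ := i }
  have : Epi φ.τ₁ := inferInstanceAs (Epi (𝟙 _))
  have : IsIso φ.τ₂ := inferInstanceAs (IsIso (𝟙 _))
  have : Mono φ.τ₃ := ‹Mono i›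
  exact (ShortComplex.exact_iff_of_epi_of_isIso_of_mono φ).1 hT

end Exactness

section Splicing

variable {C : Type*} [Category* C] [Abelian C]

lemma shortExact_kernelSequence {X Y : C} (f : X ⟶ Y) [Epi f] :
    (ShortComplex.kernelSequence f).ShortExact :=
  .mk' (ShortComplex.kernelSequence_exact f) inferInstance ‹Epi f›

lemma quasiIso_of_exact_augmentation {K : ChainComplex C ℕ} {X : C} {f : K.X 0 ⟶ X}
    {w : K.d 1 0 ≫ f = 0} [Epi f] (exact_zero : (ShortComplex.mk _ _ w).Exact)
    (exactAt_succ : ∀ n, K.ExactAt (n + 1)) :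
    QuasiIso ((ChainComplex.toSingle₀Equiv K X).symm ⟨f, w⟩) where
  quasiIsoAt
    | 0 => by
      rw [ChainComplex.quasiIsoAt₀_iff,
        ShortComplex.quasiIso_iff_of_zeros' _ (K.shape 0 0 (by simp)) rfl rfl]
      refine (ShortComplex.exact_and_epi_g_iff_of_iso ?_).2 ⟨exact_zero, ‹Epi f›⟩
      exact ShortComplex.isoMk (Iso.refl _) (Iso.refl _) (Iso.refl _)
        ((Category.id_comp _).trans (Category.comp_id _).symm)
        ((Category.id_comp _).trans ((Category.comp_id _).trans
          (ChainComplex.toSingle₀Equiv_symm_apply_f_zero f w)).symm)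
    | n + 1 => (quasiIsoAt_iff_exactAt' _ _ (ChainComplex.exactAt_succ_single_obj _ _)).2
        (exactAt_succ n)

/-- The augmentation `P₀ ⟶ X` of a projective resolution `P` of `X`, with target `X` itself rather
than the degree zero term of the complex concentrated in `X`. -/
noncomputable def augmentation {X : C} (P : ProjectiveResolution X) : P.complex.X 0 ⟶ X :=
  P.π.f 0

instance {X : C} (P : ProjectiveResolution X) : Epi (augmentation P) :=
  inferInstanceAs (Epi (P.π.f 0))

@[simp]
lemma d_comp_augmentation {X : C} (P : ProjectiveResolution X) :
    P.complex.d 1 0 ≫ augmentation P = 0 :=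
  P.complex_d_comp_π_f_zero

lemma exact_augmentation {X : C} (P : ProjectiveResolution X) :
    (ShortComplex.mk _ _ (d_comp_augmentation P)).Exact :=
  P.exact₀

lemma d_comp_augmentation_comp {X Y : C} (P : ProjectiveResolution X) (f : X ⟶ Y) :
    P.complex.d 1 0 ≫ augmentation P ≫ f = 0 := by
  rw [← Category.assoc, d_comp_augmentation, zero_comp]

/-- The complex `⋯ ⟶ P₁ ⟶ P₀ ⟶ Y` obtained by splicing a morphism `f : X ⟶ Y` onto a projective
resolution `P` of `X`, with `Y` in degree zero. -/
noncomputable def spliceComplex {X Y : C} (P : ProjectiveResolution X) (f : X ⟶ Y) :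
    ChainComplex C ℕ :=
  P.complex.augment (augmentation P ≫ f) (d_comp_augmentation_comp P f)

lemma exactAt_succ_spliceComplex {X Y : C} (P : ProjectiveResolution X) (f : X ⟶ Y) [Mono f]
    (n : ℕ) : (spliceComplex P f).ExactAt (n + 1) := by
  rw [HomologicalComplex.exactAt_iff' _ (n + 2) (n + 1) n (by simp) (by simp)]
  cases n with
  | zero => exact exact_comp_mono (exact_augmentation P) f
  | succ n => exact P.exact_succ n

/-- The projective resolution `⋯ ⟶ P₁ ⟶ P₀ ⟶ X₂` of the cokernel `X₃` in a short exact sequence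
`0 ⟶ X₁ ⟶ X₂ ⟶ X₃ ⟶ 0` with `X₂` projective, where `P` is a projective resolution of `X₁`. -/
noncomputable def spliceResolution {T : ShortComplex C} (hT : T.ShortExact) [Projective T.X₂]
    (P : ProjectiveResolution T.X₁) : ProjectiveResolution T.X₃ where
  complex := spliceComplex P T.f
  projective
    | 0 => ‹Projective T.X₂›
    | n + 1 => P.projective n
  π := (ChainComplex.toSingle₀Equiv _ _).symm
    ⟨T.g, show (augmentation P ≫ T.f) ≫ T.g = 0 by simp⟩
  quasiIso :=
    have := hT.mono_f
    have : Epi (X := (spliceComplex P T.f).X 0) T.g := hT.epi_g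
    quasiIso_of_exact_augmentation (exact_epi_comp hT.exact (augmentation P))
      (exactAt_succ_spliceComplex P T.f)

end Splicing

section DimensionShifting

/-- Deleting the degree zero term of a chain complex shifts its homology in positive degrees. -/
noncomputable def homologyTruncateIso {C : Type*} [Category* C] [HasZeroMorphisms C]
    [CategoryWithHomology C] (K : ChainComplex C ℕ) (n : ℕ) :
    (ChainComplex.truncate.obj K).homology (n + 1) ≅ K.homology (n + 2) :=
  ShortComplex.homologyMapIso
    ((ChainComplex.truncate.obj K).isoSc' (n + 2) (n + 1) n (by simp) (by simp) ≪≫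
      (K.isoSc' (n + 3) (n + 2) (n + 1) (by simp) (by simp)).symm)

variable {C : Type*} [Category* C] [Abelian C]

/-- Dimension shifting for the left derived functors of an additive functor, along a short exact
sequence with projective middle term. -/
noncomputable def leftDerivedDimensionShift {D : Type*} [Category* D] [Abelian D]
    [HasProjectiveResolutions C] (F : C ⥤ D) [F.Additive] {T : ShortComplex C}
    (hT : T.ShortExact) [Projective T.X₂] (n : ℕ) :
    (F.leftDerived (n + 2)).obj T.X₃ ≅ (F.leftDerived (n + 1)).obj T.X₁ :=
  let P := projectiveResolution T.X₁
  let Q := spliceResolution hT P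
  let FP := (F.mapHomologicalComplex _).obj P.complex
  let FQ := (F.mapHomologicalComplex _).obj Q.complex
  let truncateIso : ChainComplex.truncate.obj FQ ≅ FP :=
    (F.mapHomologicalComplex _).mapIso
      (P.complex.truncateAugment _ (d_comp_augmentation_comp P T.f))
  calc
    (F.leftDerived (n + 2)).obj T.X₃
    _ ≅ FQ.homology (n + 2) := Q.isoLeftDerivedObj F (n + 2)
    _ ≅ (ChainComplex.truncate.obj FQ).homology (n + 1) := (homologyTruncateIso FQ n).symm
    _ ≅ FP.homology (n + 1) :=
      (HomologicalComplex.homologyFunctor D _ (n + 1)).mapIso truncateIso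
    _ ≅ (F.leftDerived (n + 1)).obj T.X₁ := (P.isoLeftDerivedObj F (n + 1)).symm

/-- Dimension shifting for `Ext` in the first argument, along a short exact sequence with projective
middle term. -/
noncomputable def extDimensionShift (R : Type*) [Ring R] [Linear R C] [EnoughProjectives C]
    {T : ShortComplex C} (hT : T.ShortExact) [Projective T.X₂] (Y : C) (n : ℕ) :
    ((Ext R C (n + 2)).obj (Opposite.op T.X₃)).obj Y ≅
      ((Ext R C (n + 1)).obj (Opposite.op T.X₁)).obj Y :=
  (leftDerivedDimensionShift ((linearYoneda R C).obj Y).rightOp hT n).symm.unop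

end DimensionShifting

lemma UnifSTorsion.of_injective {R : Type u} [CommRing R] {S : Submonoid R} {M N : Type*}
    [AddCommGroup M] [Module R M] [AddCommGroup N] [Module R N] (hN : UnifSTorsion S N)
    (f : M →ₗ[R] N) (hf : Function.Injective f) : UnifSTorsion S M := by
  obtain ⟨s, hs, hsN⟩ := hN
  exact ⟨s, hs, fun m => hf (by rw [map_smul, hsN, map_zero])⟩

theorem stmt9_general {R : Type u} [CommRing R] (S : Submonoid R) {C : Type*} [Category* C]
    [Abelian C] [Linear R C] [EnoughProjectives C] (Y : C) (n : ℕ)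
    (h : ∀ X : C, UnifSTorsion S (((Ext R C (n + 1)).obj (Opposite.op X)).obj Y))
    (X : C) (k : ℕ) (hk : 1 ≤ k) :
    UnifSTorsion S (((Ext R C (n + k)).obj (Opposite.op X)).obj Y) := by
  induction k, hk using Nat.le_induction generalizing X with
  | base => exact h X
  | succ k hk ih =>
    obtain ⟨m, rfl⟩ := Nat.exists_eq_add_of_le' hk
    have syzygy_shortExact := shortExact_kernelSequence (Projective.π X)
    have : Projective (ShortComplex.kernelSequence (Projective.π X)).X₂ :=
      Projective.projective_over X
    let e := (extDimensionShift R syzygy_shortExact Y (n + m)).toLinearEquiv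
    exact (ih _).of_injective e.toLinearMap e.injective

/-- If `Ext^{n+1}(N, M)` is uniformly `S`-torsion for every `N`, then so is
`Ext^{n+k}(N, M)` for every `N` and every `k ≥ 1`. -/
theorem stmt9 {R : Type u} [CommRing R] (S : Submonoid R) (M : ModuleCat.{u} R) (n : ℕ)
    (h : ∀ N : ModuleCat.{u} R,
      UnifSTorsion S (((Ext R (ModuleCat.{u} R) (n + 1)).obj (Opposite.op N)).obj M)) :
    ∀ (N : ModuleCat.{u} R) (k : ℕ), 1 ≤ k →
      UnifSTorsion S (((Ext R (ModuleCat.{u} R) (n + k)).obj (Opposite.op N)).obj M) :=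
  stmt9_general S M n h
end
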